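/- Let He_n denote the probabilists' Hermite polynomials, defined by He_0 = 1 and He_{n+1}(x) = x·He_n(x) − He_n'(x), and define the Hermite functions ψ_n : ℝ → ℝ by ψ_n(x) := He_n(2√π·x)·e^{−πx²} (so ψ_n agrees, up to the positive constant factor 2^{n/2}, with the n-th eigenfunction H_n(√(2π)x)e^{−πx²} of the quantum harmonic oscillator −(1/4π²)d²/dx² + x²). Let x, y be nonzero real numbers with y = m·x for some nonzero integer m. Then (1/N)·#{0 ≤ n < N : sgn(ψ_n(x)) = sgn(ψ_n(y))} converges as N → ∞, to 1/2 + 1/(2m) if m ≡ 1 (mod 4), and to 1/2 otherwise. -/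

import Mathlib

open Filter Real MeasureTheory
open scoped Classical

noncomputable def sgn (t : ℝ) : ℝ := if 0 < t then 1 else if t < 0 then -1 else 0

/-- Probabilists' Hermite polynomials (as real functions):
`He 0 = 1`, `He (n+1) x = x * He n x - (He n)' x`. -/
noncomputable def He : ℕ → ℝ → ℝ
  | 0 => fun _ => 1
  | n + 1 => fun x => x * He n x - deriv (He n) x

/-- Hermite functions: `ψ n x = He n (2√π x) e^{-π x²}`. -/
noncomputable def ψ (n : ℕ) (x : ℝ) : ℝ :=
  He n (2 * Real.sqrt π * x) * Real.exp (-π * x ^ 2)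

section HermiteODE

theorem differentiable_He_and_hasDerivAt_He_succ (n : ℕ) :
    Differentiable ℝ (He n) ∧
      ∀ x, HasDerivAt (He (n + 1)) ((n + 1) * He n x) x := by
  induction n with
  | zero =>
    have h0 : He 0 = fun _ => (1 : ℝ) := rfl
    refine ⟨by rw [h0]; fun_prop, fun x => ?_⟩
    have h1 : He 1 = fun x => x := by
      funext t
      change t * He 0 t - deriv (He 0) t = t
      simp [h0]
    simpa [h1, h0] using hasDerivAt_id' x
  | succ n ih =>
    obtain ⟨hd, hs⟩ := ih
    refine ⟨fun x => (hs x).differentiableAt, fun x => ?_⟩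
    have h2 : He (n + 2) = fun t => t * He (n + 1) t - (n + 1) * He n t := by
      funext t
      change t * He (n + 1) t - deriv (He (n + 1)) t = _
      rw [(hs t).deriv]
    have h1 : He (n + 1) x = x * He n x - deriv (He n) x := rfl
    change HasDerivAt (He (n + 2)) _ x
    rw [h2]
    refine (((hasDerivAt_id x).mul (hs x)).sub
      ((hd x).hasDerivAt.const_mul ((n : ℝ) + 1))).congr_deriv ?_
    simp only [id]
    push_cast
    linear_combination ((n : ℝ) + 1) * (-h1)

theorem hasDerivAt_He (n : ℕ) (x : ℝ) :
    HasDerivAt (He n) (x * He n x - He (n + 1) x) x := by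
  refine ((differentiable_He_and_hasDerivAt_He_succ n).1 x).hasDerivAt.congr_deriv ?_
  have h1 : He (n + 1) x = x * He n x - deriv (He n) x := rfl
  linarith

theorem hasDerivAt_He_succ (n : ℕ) (x : ℝ) :
    HasDerivAt (He (n + 1)) ((n + 1) * He n x) x :=
  (differentiable_He_and_hasDerivAt_He_succ n).2 x

theorem He_add_two_zero (n : ℕ) : He (n + 2) 0 = -((n + 1) * He n 0) := by
  change 0 * He (n + 1) 0 - deriv (He (n + 1)) 0 = _
  rw [(hasDerivAt_He_succ n 0).deriv]
  ring

theorem He_even_zero_ne_zero (k : ℕ) : He (2 * k) 0 ≠ 0 := by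
  induction k with
  | zero => exact one_ne_zero
  | succ k ih =>
    rw [show 2 * (k + 1) = 2 * k + 2 by ring, He_add_two_zero]
    exact neg_ne_zero.2 (mul_ne_zero (by positivity) ih)

theorem He_odd_zero (k : ℕ) : He (2 * k + 1) 0 = 0 := by
  induction k with
  | zero =>
    change 0 * He 0 0 - deriv (fun _ => (1 : ℝ)) 0 = 0
    simp
  | succ k ih =>
    rw [show 2 * (k + 1) + 1 = (2 * k + 1) + 2 by ring, He_add_two_zero, ih]
    simp

/-- Comparison of a solution of the equation with frequency `ω² - z²/4` with the solution of the
equation with constant frequency `ω²` having the same initial data, to the right of the origin. -/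
theorem oscillator_comparison_of_nonneg {w w' : ℝ → ℝ} {ω : ℝ} (hω : 0 < ω)
    (hw : ∀ z, HasDerivAt w (w' z) z)
    (hw' : ∀ z, HasDerivAt w' (-(ω ^ 2 - z ^ 2 / 4) * w z) z) {z : ℝ} (hz : 0 ≤ z) :
    |w z - (w 0 * cos (ω * z) + w' 0 / ω * sin (ω * z))| ≤
      (|w 0| + |w' 0 / ω|) * (exp (z ^ 2 / (4 * ω) * z) - 1) := by
  set f : ℝ → ℂ := fun t => (w t : ℂ) - Complex.I * (w' t / ω : ℝ) with hf
  set e : ℝ → ℂ := fun t => Complex.exp (-(Complex.I * (ω * t : ℝ))) with he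
  set g : ℝ → ℂ := fun t => f t * e t with hg
  have hnorm_e (t : ℝ) : ‖e t‖ = 1 := by
    simp [he, Complex.norm_exp]
  have hder_g (t : ℝ) :
      HasDerivAt g (-(Complex.I * ((t ^ 2 / (4 * ω) * w t : ℝ) : ℂ)) * e t) t := by
    have h1 : HasDerivAt f ((w' t : ℂ) -
        Complex.I * ((-(ω ^ 2 - t ^ 2 / 4) * w t / ω : ℝ) : ℂ)) t :=
      (hw t).ofReal_comp.sub (((hw' t).div_const ω).ofReal_comp.const_mul Complex.I)
    have h2 : HasDerivAt e (e t * -(Complex.I * (ω : ℂ))) t := by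
      have h3 : HasDerivAt (fun s : ℝ => ω * s) ω t := by
        simpa using (hasDerivAt_id t).const_mul ω
      exact (h3.ofReal_comp.const_mul Complex.I).neg.cexp
    refine (h1.mul h2).congr_deriv ?_
    have hω' : (ω : ℂ) ≠ 0 := by exact_mod_cast hω.ne'
    simp only [hf]
    push_cast
    field_simp
    ring_nf
    simp only [Complex.I_sq]
    ring
  have hnorm_g (t : ℝ) : |w t| ≤ ‖g t‖ := by
    have : (f t).re = w t := by simp [hf]
    calc |w t| = |(f t).re| := by rw [this]
      _ ≤ ‖f t‖ := Complex.abs_re_le_norm _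
      _ = ‖g t‖ := by simp [hg, hnorm_e]
  set K : ℝ := z ^ 2 / (4 * ω) with hK
  have hK0 : 0 ≤ K := by positivity
  have hgr := norm_le_gronwallBound_of_norm_deriv_right_le
    (f := fun t => g t - g 0)
    (f' := fun t => -(Complex.I * ((t ^ 2 / (4 * ω) * w t : ℝ) : ℂ)) * e t)
    (δ := 0) (K := K) (ε := K * ‖g 0‖) (a := 0) (b := z)
    (fun t _ => ((hder_g t).sub_const _).continuousAt.continuousWithinAt)
    (fun t _ => ((hder_g t).sub_const _).hasDerivWithinAt) (by simp)
    (by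
      intro t ht
      have h1 : t ^ 2 / (4 * ω) ≤ K := by
        rw [hK]
        have := ht.2.le
        have := ht.1
        gcongr
      have h2 : ‖g t‖ ≤ ‖g t - g 0‖ + ‖g 0‖ := by
        simpa using norm_add_le (g t - g 0) (g 0)
      rw [norm_mul, hnorm_e, norm_neg, norm_mul, Complex.norm_I, Complex.norm_real,
        Real.norm_eq_abs, abs_mul, abs_of_nonneg (by positivity : 0 ≤ t ^ 2 / (4 * ω))]
      calc 1 * (t ^ 2 / (4 * ω) * |w t|) * 1 ≤ K * ‖g t‖ := by
            rw [one_mul, mul_one]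
            exact mul_le_mul h1 (hnorm_g t) (abs_nonneg _) hK0
        _ ≤ K * (‖g t - g 0‖ + ‖g 0‖) := by gcongr
        _ = _ := by ring) z ⟨hz, le_rfl⟩
  have hbound : gronwallBound 0 K (K * ‖g 0‖) (z - 0) ≤ ‖g 0‖ * (exp (K * z) - 1) := by
    rcases eq_or_ne K 0 with h | h
    · simp [h, gronwallBound_K0]
    · rw [gronwallBound_of_K_ne_0 h, mul_div_cancel_left₀ _ h]
      simp
  have hg0 : ‖g 0‖ ≤ |w 0| + |w' 0 / ω| := by
    have : g 0 = (w 0 : ℂ) - Complex.I * (w' 0 / ω : ℝ) := by simp [hg, hf, he]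
    rw [this]
    refine (norm_sub_le _ _).trans ?_
    rw [norm_mul, Complex.norm_I, one_mul, Complex.norm_real, Complex.norm_real]
    rfl
  have hexp : 0 ≤ exp (K * z) - 1 := by
    have := one_le_exp (mul_nonneg hK0 hz)
    linarith
  have hre : ((g z - g 0) * Complex.exp (Complex.I * (ω * z : ℝ))).re =
      w z - (w 0 * cos (ω * z) + w' 0 / ω * sin (ω * z)) := by
    have h1 : g z * Complex.exp (Complex.I * (ω * z : ℝ)) = f z := by
      simp only [hg, he]
      rw [mul_assoc, ← Complex.exp_add]
      simp
    have h2 : g 0 = (w 0 : ℂ) - Complex.I * (w' 0 / ω : ℝ) := by simp [hg, hf, he]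
    rw [sub_mul, h1, h2, mul_comm Complex.I (((ω * z : ℝ)) : ℂ), Complex.exp_mul_I,
      ← Complex.ofReal_cos, ← Complex.ofReal_sin]
    simp only [hf, Complex.sub_re, Complex.mul_re, Complex.add_re, Complex.ofReal_re,
      Complex.ofReal_im, Complex.I_re, Complex.I_im, Complex.sub_im, Complex.mul_im,
      Complex.add_im]
    ring
  rw [← hre]
  calc _ ≤ ‖(g z - g 0) * Complex.exp (Complex.I * (ω * z : ℝ))‖ := Complex.abs_re_le_norm _
    _ = ‖g z - g 0‖ := by
      rw [norm_mul, mul_comm Complex.I, Complex.norm_exp_ofReal_mul_I, mul_one]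
    _ ≤ ‖g 0‖ * (exp (K * z) - 1) := hgr.trans hbound
    _ ≤ _ := mul_le_mul_of_nonneg_right hg0 hexp

theorem oscillator_comparison {w w' : ℝ → ℝ} {ω : ℝ} (hω : 0 < ω)
    (hw : ∀ z, HasDerivAt w (w' z) z)
    (hw' : ∀ z, HasDerivAt w' (-(ω ^ 2 - z ^ 2 / 4) * w z) z) (z : ℝ) :
    |w z - (w 0 * cos (ω * z) + w' 0 / ω * sin (ω * z))| ≤
      (|w 0| + |w' 0 / ω|) * (exp (z ^ 2 / (4 * ω) * |z|) - 1) := by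
  rcases le_total 0 z with hz | hz
  · rw [abs_of_nonneg hz]
    exact oscillator_comparison_of_nonneg hω hw hw' hz
  · have h := oscillator_comparison_of_nonneg (w := fun t => w (-t)) (w' := fun t => -w' (-t)) hω
      (fun t => ((hw (-t)).comp t (hasDerivAt_neg t)).congr_deriv (by ring))
      (fun t => (((hw' (-t)).comp t (hasDerivAt_neg t)).neg).congr_deriv (by ring))
      (neg_nonneg.2 hz)
    rw [abs_of_nonpos hz]
    simpa [neg_div] using h

/-- The Hermite function `He n z * exp (-z² / 4)`. -/
noncomputable def hermiteFun (n : ℕ) (z : ℝ) : ℝ := He n z * exp (-z ^ 2 / 4)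

/-- The derivative of `hermiteFun n`. -/
noncomputable def hermiteFunDeriv (n : ℕ) (z : ℝ) : ℝ :=
  (z * He n z - He (n + 1) z - z / 2 * He n z) * exp (-z ^ 2 / 4)

theorem ψ_eq_hermiteFun (n : ℕ) (x : ℝ) : ψ n x = hermiteFun n (2 * √π * x) := by
  rw [ψ, hermiteFun]
  congr 2
  rw [mul_pow, mul_pow, sq_sqrt pi_pos.le]
  ring

theorem hasDerivAt_exp_neg_sq_div_four (z : ℝ) :
    HasDerivAt (fun t : ℝ => exp (-t ^ 2 / 4)) (exp (-z ^ 2 / 4) * (-z / 2)) z := by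
  refine (((hasDerivAt_pow 2 z).neg.div_const 4).exp).congr_deriv ?_
  simp
  ring

theorem hasDerivAt_hermiteFun (n : ℕ) (z : ℝ) :
    HasDerivAt (hermiteFun n) (hermiteFunDeriv n z) z := by
  refine ((hasDerivAt_He n z).mul (hasDerivAt_exp_neg_sq_div_four z)).congr_deriv ?_
  rw [hermiteFunDeriv]
  ring

theorem hasDerivAt_hermiteFunDeriv (n : ℕ) (z : ℝ) :
    HasDerivAt (hermiteFunDeriv n) (-(√(n + 1 / 2) ^ 2 - z ^ 2 / 4) * hermiteFun n z) z := by
  refine (((((hasDerivAt_id z).mul (hasDerivAt_He n z)).sub (hasDerivAt_He_succ n z)).sub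
    (((hasDerivAt_id z).div_const 2).mul (hasDerivAt_He n z))).mul
    (hasDerivAt_exp_neg_sq_div_four z)).congr_deriv ?_
  rw [hermiteFun, sq_sqrt (by positivity)]
  simp
  ring

theorem tendsto_oscillator_error (z : ℝ) {ω : ℕ → ℝ} (hω : Tendsto ω atTop atTop) :
    Tendsto (fun k => exp (z ^ 2 / (4 * ω k) * |z|) - 1) atTop (nhds 0) := by
  have h : Tendsto (fun k => z ^ 2 / (4 * ω k) * |z|) atTop (nhds (0 * |z|)) :=
    (Tendsto.const_div_atTop (hω.const_mul_atTop (by norm_num)) _).mul_const _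
  rw [zero_mul] at h
  simpa using ((continuous_exp.tendsto 0).comp h).sub_const 1

theorem tendsto_sqrt_natCast_mul_add (a b : ℝ) (ha : 0 < a) :
    Tendsto (fun k : ℕ => √(a * k + b)) atTop atTop :=
  tendsto_sqrt_atTop.comp
    (tendsto_atTop_add_const_right _ _ (tendsto_natCast_atTop_atTop.const_mul_atTop ha))

theorem tendsto_hermiteFun_even (z : ℝ) :
    Tendsto (fun k : ℕ => hermiteFun (2 * k) z / hermiteFun (2 * k) 0 -
      cos (√(2 * k + 1 / 2) * z)) atTop (nhds 0) := by
  refine squeeze_zero_norm (fun k => ?_)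
    (tendsto_oscillator_error z (tendsto_sqrt_natCast_mul_add 2 (1 / 2) two_pos))
  have h0 : hermiteFun (2 * k) 0 ≠ 0 := mul_ne_zero (He_even_zero_ne_zero k) (exp_ne_zero _)
  have h1 : hermiteFunDeriv (2 * k) 0 = 0 := by simp [hermiteFunDeriv, He_odd_zero]
  have h := oscillator_comparison (ω := √(((2 * k : ℕ) : ℝ) + 1 / 2)) (by positivity)
    (hasDerivAt_hermiteFun (2 * k)) (hasDerivAt_hermiteFunDeriv (2 * k)) z
  rw [h1] at h
  push_cast at h
  simp only [zero_div, zero_mul, add_zero, abs_zero] at h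
  rw [norm_eq_abs, div_sub' h0, abs_div, div_le_iff₀' (abs_pos.2 h0)]
  exact h

theorem hermiteFunDeriv_odd_zero_ne_zero (k : ℕ) : hermiteFunDeriv (2 * k + 1) 0 ≠ 0 := by
  have := He_even_zero_ne_zero (k + 1)
  simpa [hermiteFunDeriv, mul_add] using this

theorem tendsto_hermiteFun_odd (z : ℝ) :
    Tendsto (fun k : ℕ => hermiteFun (2 * k + 1) z /
        (hermiteFunDeriv (2 * k + 1) 0 / √(2 * k + 3 / 2)) -
      sin (√(2 * k + 3 / 2) * z)) atTop (nhds 0) := by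
  refine squeeze_zero_norm (fun k => ?_)
    (tendsto_oscillator_error z (tendsto_sqrt_natCast_mul_add 2 (3 / 2) two_pos))
  have h1 : hermiteFun (2 * k + 1) 0 = 0 := by simp [hermiteFun, He_odd_zero]
  have hω : 0 < √(2 * (k : ℝ) + 3 / 2) := by positivity
  have h0 : hermiteFunDeriv (2 * k + 1) 0 / √(2 * k + 3 / 2) ≠ 0 :=
    div_ne_zero (hermiteFunDeriv_odd_zero_ne_zero k) hω.ne'
  have hcast : ((2 * k + 1 : ℕ) : ℝ) + 1 / 2 = 2 * k + 3 / 2 := by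
    push_cast
    ring
  have h := oscillator_comparison (ω := √(((2 * k + 1 : ℕ) : ℝ) + 1 / 2)) (by positivity)
    (hasDerivAt_hermiteFun (2 * k + 1)) (hasDerivAt_hermiteFunDeriv (2 * k + 1)) z
  rw [h1, hcast] at h
  simp only [zero_mul, zero_add, abs_zero] at h
  rw [norm_eq_abs, div_sub' h0, abs_div, div_le_iff₀' (abs_pos.2 h0)]
  exact h

end HermiteODE

section Equidistribution

theorem abs_image_sub_sub_le {G g : ℝ → ℝ} {L : ℝ} (hL : 0 ≤ L) (hG : ∀ t, HasDerivAt G (g t) t)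
    (hg : ∀ s t, |g s - g t| ≤ L * |s - t|) (u v : ℝ) :
    |G v - G u - g u * (v - u)| ≤ L * |v - u| * |v - u| := by
  have h := (convex_uIcc u v).norm_image_sub_le_of_norm_hasDerivWithin_le
    (f := fun t => G t - g u * t) (f' := fun t => g t - g u) (C := L * |v - u|)
    (fun t _ => ((hG t).sub (by simpa using (hasDerivAt_id t).const_mul (g u))).hasDerivWithinAt)
    (fun t ht => (hg t u).trans
      (mul_le_mul_of_nonneg_left (Set.abs_sub_left_of_mem_uIcc ht) hL))
    Set.left_mem_uIcc Set.right_mem_uIcc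
  rw [norm_eq_abs, norm_eq_abs] at h
  convert h using 2
  ring

theorem tendsto_sqrt_add_sub_sqrt (a d : ℝ) (ha : 0 ≤ a) (hd : 0 < d) :
    Tendsto (fun k : ℕ => √(k + a + d) - √(k + d)) atTop (nhds 0) := by
  have h : Tendsto (fun k : ℕ => a / √((k : ℝ) + d)) atTop (nhds 0) :=
    Tendsto.const_div_atTop (tendsto_sqrt_atTop.comp
      (tendsto_atTop_add_const_right _ _ tendsto_natCast_atTop_atTop)) _
  refine squeeze_zero (fun k => sub_nonneg.2 (sqrt_le_sqrt (by linarith))) (fun k => ?_) h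
  have h1 : 0 < √((k : ℝ) + d) := sqrt_pos.2 (by positivity)
  have h2 := sq_sqrt (by positivity : 0 ≤ (k : ℝ) + d)
  have h3 := sq_sqrt (by positivity : 0 ≤ (k : ℝ) + a + d)
  have h4 : √((k : ℝ) + d) ≤ √(k + a + d) := sqrt_le_sqrt (by linarith)
  rw [le_div_iff₀ h1]
  nlinarith

theorem tendsto_average_comp_sqrt_of_integral_eq_zero {g : ℝ → ℝ} {T L : ℝ} (hT : T ≠ 0)
    (hL : 0 ≤ L) (hg : ∀ s t, |g s - g t| ≤ L * |s - t|) (hp : Function.Periodic g T)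
    (h0 : ∫ t in 0..T, g t = 0) {c d : ℝ} (hc : c ≠ 0) (hd : 0 < d) :
    Tendsto (fun N : ℕ => (∑ k ∈ Finset.range N, g (c * √(k + d))) / N) atTop (nhds 0) := by
  have hcont : Continuous g := by
    refine (LipschitzWith.of_dist_le_mul (K := ⟨L, hL⟩) fun s t => ?_).continuous
    exact hg s t
  set G : ℝ → ℝ := fun u => ∫ t in 0..u, g t with hGdef
  have hG (t : ℝ) : HasDerivAt G (g t) t := hcont.integral_hasStrictDerivAt 0 t |>.hasDerivAt
  have hGp : Function.Periodic G T := by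
    intro u
    have h1 := intervalIntegral.integral_add_adjacent_intervals
      (hcont.intervalIntegrable 0 u) (hcont.intervalIntegrable u (u + T)) (μ := volume)
    have h2 := hp.intervalIntegral_add_eq u 0
    rw [zero_add, h0] at h2
    simp only [hGdef]
    linarith
  obtain ⟨B, hB⟩ : ∃ B, ∀ t, |G t| ≤ B := by
    have hGc : Continuous G := continuous_iff_continuousAt.2 fun t => (hG t).continuousAt
    obtain ⟨B, hB⟩ := (hGp.isBounded_of_continuous hT hGc).exists_norm_le
    exact ⟨B, fun t => hB _ ⟨t, rfl⟩⟩
  set r : ℕ → ℝ := fun k => √(k + d) with hr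
  have hrpos (k : ℕ) : 0 < r k := sqrt_pos.2 (by positivity)
  have hrsq (k : ℕ) : r k ^ 2 = k + d := sq_sqrt (by positivity)
  have hprod (k : ℕ) : (r (k + 1) - r k) * (r (k + 1) + r k) = 1 := by
    have h1 := hrsq k
    have h2 := hrsq (k + 1)
    push_cast at h2
    linear_combination h2 - h1
  have hstep : Tendsto (fun k => r (k + 1) - r k) atTop (nhds 0) := by
    have := tendsto_sqrt_add_sub_sqrt 1 d zero_le_one hd
    simpa [hr] using this
  have hstep2 : Tendsto (fun k => r (k + 2) - r k) atTop (nhds 0) := by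
    have := tendsto_sqrt_add_sub_sqrt 2 d zero_le_two hd
    simpa [hr] using this
  -- discrete antiderivative of `k ↦ g (c * r k)`, up to a null sequence
  set S : ℕ → ℝ := fun k => G (c * r k) * (r (k + 1) + r k) / c with hS
  have herr : Tendsto (fun k => g (c * r k) - (S (k + 1) - S k)) atTop (nhds 0) := by
    have hb : Tendsto (fun k => L * |c| * |r (k + 1) - r k| + B * |r (k + 2) - r k| / |c|)
        atTop (nhds 0) := by
      simpa using (hstep.abs.const_mul (L * |c|)).add ((hstep2.abs.const_mul B).div_const |c|)
    refine squeeze_zero_norm (fun k => ?_) hb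
    have h1 := abs_image_sub_sub_le hL hG hg (c * r k) (c * r (k + 1))
    have hc' : 0 < |c| := abs_pos.2 hc
    have hid : g (c * r k) - (S (k + 1) - S k) =
        -((G (c * r (k + 1)) - G (c * r k) - g (c * r k) * (c * r (k + 1) - c * r k)) *
          (r (k + 1) + r k) / c) - G (c * r (k + 1)) * (r (k + 2) - r k) / c := by
      simp only [hS]
      field_simp
      linear_combination (-c * g (c * r k)) * hprod k
    rw [hid, norm_eq_abs]
    refine (abs_sub _ _).trans (add_le_add ?_ ?_)
    · rw [abs_neg, abs_div, abs_mul, div_le_iff₀ hc']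
      calc _ ≤ L * |c * r (k + 1) - c * r k| * |c * r (k + 1) - c * r k| * |r (k + 1) + r k| := by
            gcongr
        _ = L * |c| * |r (k + 1) - r k| * |c| * |(r (k + 1) - r k) * (r (k + 1) + r k)| := by
            rw [← mul_sub, abs_mul, abs_mul]
            ring
        _ = _ := by rw [hprod, abs_one, mul_one]
    · rw [abs_div, abs_mul]
      gcongr
      exact hB _
  have hSlim : Tendsto (fun N : ℕ => (S N - S 0) / N) atTop (nhds 0) := by
    have hB0 : 0 ≤ B := (abs_nonneg _).trans (hB 0)
    have hrN : Tendsto (fun N : ℕ => r (N + 1) / N) atTop (nhds 0) := by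
      have h1 : Tendsto (fun N : ℕ => √((1 + (1 + d) / N) / N)) atTop (nhds 0) := by
        have h2 : Tendsto (fun N : ℕ => (1 + (1 + d) / (N : ℝ)) * (N : ℝ)⁻¹) atTop
            (nhds ((1 + 0) * 0)) :=
          ((tendsto_const_div_atTop_nhds_zero_nat _).const_add 1).mul
            tendsto_inv_atTop_nhds_zero_nat
        simpa [Function.comp_def, div_eq_mul_inv] using (continuous_sqrt.tendsto _).comp h2
      refine h1.congr' ?_
      filter_upwards [eventually_gt_atTop 0] with N hN
      have hN' : (0 : ℝ) < N := by exact_mod_cast hN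
      rw [sqrt_eq_iff_mul_self_eq (by positivity) (div_nonneg (hrpos _).le hN'.le)]
      have := hrsq (N + 1)
      push_cast at this
      field_simp
      rw [this]
      ring
    have h2 : Tendsto (fun N : ℕ => 2 * B / |c| * (r (N + 1) / N)) atTop (nhds 0) := by
      simpa using hrN.const_mul (2 * B / |c|)
    have h3 : Tendsto (fun N : ℕ => S N / N) atTop (nhds 0) := by
      refine squeeze_zero_norm (fun N => ?_) h2
      have hle : r N ≤ r (N + 1) := sqrt_le_sqrt (by push_cast; linarith)
      rw [norm_eq_abs, abs_div, Nat.abs_cast, hS]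
      simp only
      rw [abs_div, abs_mul, abs_of_pos (add_pos (hrpos (N + 1)) (hrpos N))]
      calc _ ≤ B * (r (N + 1) + r (N + 1)) / |c| / N := by
            gcongr
            exact hB _
        _ = _ := by ring
    simpa [sub_div] using h3.sub (tendsto_const_div_atTop_nhds_zero_nat (S 0))
  have := (herr.cesaro).add hSlim
  simp only [add_zero] at this
  refine this.congr fun N => ?_
  rw [Finset.sum_sub_distrib, Finset.sum_range_sub]
  ring

theorem tendsto_average_comp_sqrt {F : ℝ → ℝ} {T L : ℝ} (hT : T ≠ 0)
    (hL : 0 ≤ L) (hF : ∀ s t, |F s - F t| ≤ L * |s - t|) (hp : Function.Periodic F T)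
    {c d : ℝ} (hc : c ≠ 0) (hd : 0 < d) :
    Tendsto (fun N : ℕ => (∑ k ∈ Finset.range N, F (c * √(k + d))) / N) atTop
      (nhds ((∫ t in 0..T, F t) / T)) := by
  have hcont : Continuous F := by
    refine (LipschitzWith.of_dist_le_mul (K := ⟨L, hL⟩) fun s t => ?_).continuous
    exact hF s t
  set μ := (∫ t in 0..T, F t) / T with hμ
  have h := tendsto_average_comp_sqrt_of_integral_eq_zero (g := fun t => F t - μ) hT hL
    (by simpa using hF) (fun t => by simp [hp t])
    (by
      rw [intervalIntegral.integral_sub (hcont.intervalIntegrable _ _) (by simp)]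
      simp [hμ]
      field_simp
      simp) hc hd
  have h' := h.add_const μ
  rw [zero_add] at h'
  refine h'.congr' ?_
  filter_upwards [eventually_gt_atTop 0] with N hN
  have hN' : (N : ℝ) ≠ 0 := by exact_mod_cast hN.ne'
  rw [Finset.sum_sub_distrib]
  simp
  field_simp
  ring

theorem tendsto_average_of_tendsto_cos {Φ : ℝ → ℝ → ℝ} {L : ℝ} (hL : 0 ≤ L)
    (hΦ : ∀ a b a' b', |Φ a b - Φ a' b'| ≤ L * (|a - a'| + |b - b'|)) (m : ℤ) (p : ℝ)
    {c d : ℝ} (hc : c ≠ 0) (hd : 0 < d) {a b : ℕ → ℝ}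
    (ha : Tendsto (fun k : ℕ => a k - cos (c * √(k + d) - p)) atTop (nhds 0))
    (hb : Tendsto (fun k : ℕ => b k - cos (m * (c * √(k + d)) - p)) atTop (nhds 0)) :
    Tendsto (fun N : ℕ => (∑ k ∈ Finset.range N, Φ (a k) (b k)) / N) atTop
      (nhds ((∫ t in 0..2 * π, Φ (cos (t - p)) (cos (m * t - p))) / (2 * π))) := by
  have h1 := tendsto_average_comp_sqrt (F := fun t => Φ (cos (t - p)) (cos (m * t - p)))
    (T := 2 * π) (L := L * (1 + |(m : ℝ)|)) two_pi_pos.ne' (by positivity)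
    (fun s t => by
      refine (hΦ _ _ _ _).trans ?_
      rw [mul_assoc]
      refine mul_le_mul_of_nonneg_left ?_ hL
      have e1 := abs_cos_sub_cos_le (s - p) (t - p)
      have e2 := abs_cos_sub_cos_le (m * s - p) (m * t - p)
      rw [sub_sub_sub_cancel_right] at e1 e2
      rw [← mul_sub, abs_mul] at e2
      linarith)
    (fun t => by
      simp only
      rw [show t + 2 * π - p = t - p + 2 * π by ring, cos_add_two_pi,
        show (m : ℝ) * (t + 2 * π) - p = m * t - p + m * (2 * π) by ring, cos_add_int_mul_two_pi])
    hc hd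
  have h2 : Tendsto (fun k : ℕ => Φ (a k) (b k) -
      Φ (cos (c * √(k + d) - p)) (cos (m * (c * √(k + d)) - p))) atTop (nhds 0) := by
    refine squeeze_zero_norm (fun k => hΦ _ _ _ _) ?_
    simpa using (ha.abs.add hb.abs).const_mul L
  have h3 := h2.cesaro.add h1
  rw [zero_add] at h3
  refine h3.congr fun N => ?_
  rw [Finset.sum_sub_distrib]
  ring

end Equidistribution

section Clamp

theorem sgn_mul_of_pos {r : ℝ} (hr : 0 < r) (t : ℝ) : sgn (r * t) = sgn t := by
  simp only [sgn, mul_pos_iff_of_pos_left hr, mul_neg_iff, hr, not_lt_of_gt hr, true_and,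
    false_and, or_false]

theorem sgn_neg (t : ℝ) : sgn (-t) = -sgn t := by
  rcases lt_trichotomy t 0 with h | h | h
  · simp [sgn, h, not_lt_of_gt h]
  · simp [sgn, h]
  · simp [sgn, h, not_lt_of_gt h]

theorem sgn_div_eq_sgn_div_iff {r : ℝ} (hr : r ≠ 0) (s t : ℝ) :
    sgn (s / r) = sgn (t / r) ↔ sgn s = sgn t := by
  rw [div_eq_inv_mul, div_eq_inv_mul]
  rcases lt_or_gt_of_ne hr with h | h
  · have hr' : 0 < -r⁻¹ := neg_pos.2 (inv_lt_zero.2 h)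
    rw [← neg_inj, ← sgn_neg, ← sgn_neg, ← neg_mul, ← neg_mul, sgn_mul_of_pos hr',
      sgn_mul_of_pos hr']
  · rw [sgn_mul_of_pos (inv_pos.2 h), sgn_mul_of_pos (inv_pos.2 h)]

theorem measurable_sgn : Measurable sgn :=
  Measurable.ite measurableSet_Ioi measurable_const
    (Measurable.ite measurableSet_Iio measurable_const measurable_const)

theorem abs_sgn_le_one (t : ℝ) : |sgn t| ≤ 1 := by
  unfold sgn
  split_ifs <;> simp

theorem abs_sgn_of_ne_zero {t : ℝ} (ht : t ≠ 0) : |sgn t| = 1 := by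
  rcases lt_or_gt_of_ne ht with h | h
  · simp [sgn, h, not_lt_of_gt h]
  · simp [sgn, h]

/-- The piecewise linear approximation of `sgn` of slope `r` at the origin. -/
noncomputable def clampSgn (r t : ℝ) : ℝ := max (-1) (min 1 (r * t))

theorem abs_clampSgn_le_one (r t : ℝ) : |clampSgn r t| ≤ 1 :=
  abs_le.2 ⟨le_max_left _ _, max_le (by norm_num) (min_le_left _ _)⟩

theorem abs_clampSgn_sub_le {r : ℝ} (hr : 0 ≤ r) (s t : ℝ) :
    |clampSgn r s - clampSgn r t| ≤ r * |s - t| := by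
  unfold clampSgn
  calc _ ≤ |min 1 (r * s) - min 1 (r * t)| := by
        simpa using abs_max_sub_max_le_max (-1) (min 1 (r * s)) (-1) (min 1 (r * t))
    _ ≤ |r * s - r * t| := by
        simpa using abs_min_sub_min_le_max 1 (r * s) 1 (r * t)
    _ = _ := by rw [← mul_sub, abs_mul, abs_of_nonneg hr]

theorem continuous_clampSgn (r : ℝ) : Continuous (clampSgn r) := by
  unfold clampSgn
  fun_prop

theorem tendsto_clampSgn (t : ℝ) :
    Tendsto (fun j : ℕ => clampSgn j t) atTop (nhds (sgn t)) := by
  refine tendsto_const_nhds.congr' ?_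
  rcases lt_trichotomy t 0 with h | h | h
  · have := (tendsto_natCast_atTop_atTop (R := ℝ)).atTop_mul_const_of_neg h
    filter_upwards [this.eventually_le_atBot (-1)] with j hj
    rw [clampSgn, min_eq_right (by linarith), max_eq_left hj]
    simp [sgn, h, not_lt_of_gt h]
  · simp [h, sgn, clampSgn]
  · have := (tendsto_natCast_atTop_atTop (R := ℝ)).atTop_mul_const h
    filter_upwards [this.eventually_ge_atTop 1] with j hj
    rw [clampSgn, min_eq_left hj]
    simp [sgn, h]

theorem clampSgn_eq_sgn_mul_abs {r : ℝ} (hr : 0 ≤ r) (t : ℝ) :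
    clampSgn r t = sgn t * |clampSgn r t| := by
  rcases lt_trichotomy t 0 with h | h | h
  · have h1 : r * t ≤ 0 := mul_nonpos_of_nonneg_of_nonpos hr h.le
    have : clampSgn r t ≤ 0 := max_le (by norm_num) ((min_le_right _ _).trans h1)
    simp [sgn, h, not_lt_of_gt h, abs_of_nonpos this]
  · simp [h, clampSgn]
  · have : 0 ≤ clampSgn r t := le_max_of_le_right (le_min zero_le_one (by positivity))
    simp [sgn, h, abs_of_nonneg this]

theorem abs_ite_sgn_eq_sub_le {r : ℝ} (hr : 0 ≤ r) (a b : ℝ) :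
    |(if sgn a = sgn b then (1 : ℝ) else 0) - (1 + clampSgn r a * clampSgn r b) / 2| ≤
      (1 - |clampSgn r a|) + (1 - |clampSgn r b|) := by
  have ha := clampSgn_eq_sgn_mul_abs hr a
  have hb := clampSgn_eq_sgn_mul_abs hr b
  have ha1 := abs_clampSgn_le_one r a
  have hb1 := abs_clampSgn_le_one r b
  have ha0 := abs_nonneg (clampSgn r a)
  have hb0 := abs_nonneg (clampSgn r b)
  have hs (t : ℝ) : sgn t = 1 ∨ sgn t = -1 ∨ sgn t = 0 := by
    unfold sgn
    split_ifs <;> simp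
  have ha2 : |clampSgn r a| = |sgn a| * |clampSgn r a| := by
    conv_lhs => rw [ha, abs_mul, abs_abs]
  have hb2 : |clampSgn r b| = |sgn b| * |clampSgn r b| := by
    conv_lhs => rw [hb, abs_mul, abs_abs]
  generalize |clampSgn r a| = u at *
  generalize |clampSgn r b| = v at *
  rw [abs_le, ha, hb]
  rcases hs a with h | h | h <;> rcases hs b with h' | h' | h' <;> rw [h, h'] <;>
    rw [h] at ha2 <;> rw [h'] at hb2 <;> norm_num at ha2 hb2 ⊢ <;> constructor <;>
    nlinarith

theorem abs_clampSgn_mul_sub_le {r : ℝ} (hr : 0 ≤ r) (a b a' b' : ℝ) :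
    |clampSgn r a * clampSgn r b - clampSgn r a' * clampSgn r b'| ≤
      r * (|a - a'| + |b - b'|) := by
  have h1 := abs_clampSgn_sub_le hr a a'
  have h2 := abs_clampSgn_sub_le hr b b'
  have h3 := abs_clampSgn_le_one r b
  have h4 := abs_clampSgn_le_one r a'
  calc _ = |(clampSgn r a - clampSgn r a') * clampSgn r b +
        clampSgn r a' * (clampSgn r b - clampSgn r b')| := by ring_nf
    _ ≤ |clampSgn r a - clampSgn r a'| * |clampSgn r b| +
        |clampSgn r a'| * |clampSgn r b - clampSgn r b'| := by
      rw [← abs_mul, ← abs_mul]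
      exact abs_add_le _ _
    _ ≤ r * |a - a'| * 1 + 1 * (r * |b - b'|) := by gcongr
    _ = _ := by ring

theorem abs_clampSgn_error_sub_le {r : ℝ} (hr : 0 ≤ r) (a b a' b' : ℝ) :
    |((1 - |clampSgn r a|) + (1 - |clampSgn r b|)) -
      ((1 - |clampSgn r a'|) + (1 - |clampSgn r b'|))| ≤ r * (|a - a'| + |b - b'|) := by
  have h1 := (abs_abs_sub_abs_le (clampSgn r a) (clampSgn r a')).trans (abs_clampSgn_sub_le hr a a')
  have h2 := (abs_abs_sub_abs_le (clampSgn r b) (clampSgn r b')).trans (abs_clampSgn_sub_le hr b b')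
  rw [abs_le] at *
  constructor <;> linarith [h1.1, h1.2, h2.1, h2.2]

end Clamp

theorem tendsto_of_forall_squeeze {e : ℕ → ℝ} {A R : ℕ → ℕ → ℝ} {α ρ : ℕ → ℝ} {l : ℝ}
    (he : ∀ j N, |e N - A j N| ≤ R j N) (hA : ∀ j, Tendsto (A j) atTop (nhds (α j)))
    (hR : ∀ j, Tendsto (R j) atTop (nhds (ρ j))) (hα : Tendsto α atTop (nhds l))
    (hρ : Tendsto ρ atTop (nhds 0)) : Tendsto e atTop (nhds l) := by
  rw [tendsto_order]
  constructor
  · intro u hu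
    have h1 : Tendsto (fun j => α j - ρ j) atTop (nhds l) := by simpa using hα.sub hρ
    obtain ⟨j, hj⟩ := (h1.eventually (lt_mem_nhds hu)).exists
    filter_upwards [((hA j).sub (hR j)).eventually (lt_mem_nhds hj)] with N hN
    linarith [(abs_le.1 (he j N)).1]
  · intro u hu
    have h1 : Tendsto (fun j => α j + ρ j) atTop (nhds l) := by simpa using hα.add hρ
    obtain ⟨j, hj⟩ := (h1.eventually (gt_mem_nhds hu)).exists
    filter_upwards [((hA j).add (hR j)).eventually (gt_mem_nhds hj)] with N hN
    linarith [(abs_le.1 (he j N)).2]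

theorem ae_cos_intCast_mul_sub_ne_zero {m : ℤ} (hm : m ≠ 0) (p : ℝ) :
    ∀ᵐ t : ℝ, cos (m * t - p) ≠ 0 := by
  have hm' : (m : ℝ) ≠ 0 := by exact_mod_cast hm
  have hc : (Set.range fun k : ℤ => ((2 * k + 1) * π / 2 + p) / (m : ℝ)).Countable :=
    Set.countable_range _
  filter_upwards [hc.ae_notMem volume] with t ht h
  obtain ⟨k, hk⟩ := cos_eq_zero_iff.1 h
  exact ht ⟨k, (div_eq_iff hm').2 (by linarith)⟩

/-- The correlation integral of two square waves. -/
noncomputable def squareWaveIntegral (m : ℤ) (p : ℝ) : ℝ :=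
  ∫ t in 0..2 * π, sgn (cos (t - p)) * sgn (cos (m * t - p))

theorem tendsto_average_sgn_eq {m : ℤ} (hm : m ≠ 0) (p : ℝ)
    {c d : ℝ} (hc : c ≠ 0) (hd : 0 < d) {a b : ℕ → ℝ}
    (ha : Tendsto (fun k : ℕ => a k - cos (c * √(k + d) - p)) atTop (nhds 0))
    (hb : Tendsto (fun k : ℕ => b k - cos (m * (c * √(k + d)) - p)) atTop (nhds 0)) :
    Tendsto (fun N : ℕ =>
        (∑ k ∈ Finset.range N, if sgn (a k) = sgn (b k) then (1 : ℝ) else 0) / N) atTop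
      (nhds ((1 + squareWaveIntegral m p / (2 * π)) / 2)) := by
  have hcA (j : ℕ) : Continuous fun t => clampSgn j (cos (t - p)) :=
    (continuous_clampSgn j).comp (by fun_prop)
  have hcB (j : ℕ) : Continuous fun t => clampSgn j (cos (m * t - p)) :=
    (continuous_clampSgn j).comp (by fun_prop)
  have hA (j : ℕ) := tendsto_average_of_tendsto_cos (Nat.cast_nonneg j)
    (abs_clampSgn_mul_sub_le (Nat.cast_nonneg (α := ℝ) j)) m p hc hd ha hb
  have hR (j : ℕ) := tendsto_average_of_tendsto_cos (Nat.cast_nonneg j)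
    (Φ := fun a b => (1 - |clampSgn j a|) + (1 - |clampSgn j b|))
    (abs_clampSgn_error_sub_le (Nat.cast_nonneg (α := ℝ) j)) m p hc hd ha hb
  refine tendsto_of_forall_squeeze (fun j N => ?_)
    (fun j => (((hA j).const_add 1).div_const 2).congr' ?_) hR ?_ ?_
    (A := fun j N => (∑ k ∈ Finset.range N, (1 + clampSgn j (a k) * clampSgn j (b k)) / 2) / N)
  · rw [← sub_div, ← Finset.sum_sub_distrib, abs_div, Nat.abs_cast]
    gcongr
    exact (Finset.abs_sum_le_sum_abs _ _).trans
      (Finset.sum_le_sum fun k _ => abs_ite_sgn_eq_sub_le (Nat.cast_nonneg j) _ _)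
  · filter_upwards [eventually_gt_atTop 0] with N hN
    have hN' : (N : ℝ) ≠ 0 := by exact_mod_cast hN.ne'
    rw [← Finset.sum_div, Finset.sum_add_distrib]
    simp
    field_simp
  · refine (Tendsto.const_add 1 (Tendsto.div_const ?_ _)).div_const 2
    refine intervalIntegral.tendsto_integral_filter_of_dominated_convergence (fun _ => 1)
      (Eventually.of_forall fun j => ((hcA j).mul (hcB j)).aestronglyMeasurable)
      (Eventually.of_forall fun j => ae_of_all _ fun t _ => ?_) (by simp)
      (ae_of_all _ fun t _ => (tendsto_clampSgn _).mul (tendsto_clampSgn _))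
    rw [norm_mul]
    exact mul_le_one₀ (abs_clampSgn_le_one _ _) (abs_nonneg _) (abs_clampSgn_le_one _ _)
  · have h0 : ∫ t in 0..2 * π, ((1 - |sgn (cos (t - p))|) + (1 - |sgn (cos (m * t - p))|)) = 0 := by
      refine intervalIntegral.integral_zero_ae ?_
      filter_upwards [ae_cos_intCast_mul_sub_ne_zero one_ne_zero p,
        ae_cos_intCast_mul_sub_ne_zero hm p] with t h1 h2 _
      rw [Int.cast_one, one_mul] at h1
      simp [abs_sgn_of_ne_zero h1, abs_sgn_of_ne_zero h2]
    have h : Tendsto (fun j : ℕ => ∫ t in 0..2 * π, ((1 - |clampSgn j (cos (t - p))|) +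
        (1 - |clampSgn j (cos (m * t - p))|))) atTop (nhds 0) := by
      rw [← congrArg nhds h0]
      refine intervalIntegral.tendsto_integral_filter_of_dominated_convergence (fun _ => 2)
        (Eventually.of_forall fun j => ((continuous_const.sub (hcA j).abs).add
          (continuous_const.sub (hcB j).abs)).aestronglyMeasurable)
        (Eventually.of_forall fun j => ae_of_all _ fun t _ => ?_)
        (continuous_const.intervalIntegrable _ _)
        (ae_of_all _ fun t _ => ((tendsto_clampSgn _).abs.const_sub 1).add
          ((tendsto_clampSgn _).abs.const_sub 1))
      have h1 := abs_clampSgn_le_one j (cos (t - p))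
      have h2 := abs_clampSgn_le_one j (cos (m * t - p))
      rw [norm_eq_abs, abs_of_nonneg (by linarith)]
      linarith [abs_nonneg (clampSgn j (cos (t - p))), abs_nonneg (clampSgn j (cos (m * t - p)))]
    simpa using h.div_const (2 * π)

section SquareWave

theorem integral_eq_zero_of_antiperiodic {f : ℝ → ℝ} {c : ℝ} (hf : Function.Antiperiodic f c) :
    ∫ t in 0..2 * c, f t = 0 := by
  have h1 := hf.periodic_two_mul.intervalIntegral_add_eq c 0
  have h2 : ∫ t in 0..2 * c, f (t + c) = ∫ t in c..c + 2 * c, f t := by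
    rw [intervalIntegral.integral_comp_add_right, zero_add, add_comm]
  have h3 : ∫ t in 0..2 * c, f (t + c) = -∫ t in 0..2 * c, f t := by
    rw [← intervalIntegral.integral_neg]
    exact intervalIntegral.integral_congr fun t _ => hf t
  rw [zero_add] at h1
  linarith

theorem squareWaveIntegral_even (q : ℤ) (p : ℝ) : squareWaveIntegral (2 * q) p = 0 := by
  refine integral_eq_zero_of_antiperiodic fun t => ?_
  rw [show t + π - p = t - p + π by ring, cos_add_pi, sgn_neg]
  push_cast
  rw [show (2 * (q : ℝ)) * (t + π) - p = 2 * q * t - p + q * (2 * π) by ring,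
    cos_add_int_mul_two_pi]
  ring

theorem squareWaveIntegral_zero_eq_shift (m : ℤ) :
    squareWaveIntegral m 0 =
      ∫ t in 0..2 * π, sgn (cos (t - π / 2)) * sgn (cos (m * (t - π / 2))) := by
  have hp : Function.Periodic (fun t => sgn (cos t) * sgn (cos (m * t))) (2 * π) := fun t => by
    simp only
    rw [cos_add_two_pi, mul_add, cos_add_int_mul_two_pi]
  have h := hp.intervalIntegral_add_eq 0 (-(π / 2))
  rw [intervalIntegral.integral_comp_sub_right (fun t => sgn (cos t) * sgn (cos (m * t)))]
  rw [squareWaveIntegral]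
  simp only [sub_zero, zero_sub, zero_add] at h ⊢
  rw [h]
  congr 1
  ring

theorem squareWaveIntegral_zero_of_one_mod_four (q : ℤ) :
    squareWaveIntegral (4 * q + 1) 0 = squareWaveIntegral (4 * q + 1) (π / 2) := by
  rw [squareWaveIntegral_zero_eq_shift, squareWaveIntegral]
  refine intervalIntegral.integral_congr fun t _ => ?_
  congr 2
  rw [← cos_sub_int_mul_two_pi (((4 * q + 1 : ℤ) : ℝ) * t - π / 2) q]
  congr 1
  push_cast
  ring

theorem squareWaveIntegral_zero_of_three_mod_four (q : ℤ) :
    squareWaveIntegral (4 * q + 3) 0 = -squareWaveIntegral (4 * q + 3) (π / 2) := by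
  rw [squareWaveIntegral_zero_eq_shift, squareWaveIntegral, ← intervalIntegral.integral_neg]
  refine intervalIntegral.integral_congr fun t _ => ?_
  rw [← mul_neg, ← sgn_neg, ← cos_sub_pi,
    ← cos_sub_int_mul_two_pi (((4 * q + 3 : ℤ) : ℝ) * t - π / 2 - π) q]
  congr 3
  push_cast
  ring

theorem intervalIntegrable_sgn_comp {f : ℝ → ℝ} (hf : Continuous f) (a b : ℝ) :
    IntervalIntegrable (fun t => sgn (f t)) volume a b := by
  refine (intervalIntegrable_const (c := (1 : ℝ))).mono_fun
    (measurable_sgn.comp hf.measurable).aestronglyMeasurable (ae_of_all _ fun t => ?_)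
  simpa using abs_sgn_le_one (f t)

theorem integral_sgn_sin_zero_pi : ∫ t in 0..π, sgn (sin t) = π := by
  have : ∫ t in 0..π, sgn (sin t) = ∫ t in 0..π, (1 : ℝ) := by
    refine intervalIntegral.integral_congr_Ioo_of_le pi_pos.le fun t ht => ?_
    simp [sgn, sin_pos_of_mem_Ioo ht]
  simpa using this

theorem integral_sgn_sin_mul_pi (q : ℤ) : ∫ t in 0..(4 * q + 1) * π, sgn (sin t) = π := by
  have hanti : Function.Antiperiodic (fun t => sgn (sin t)) π := fun t => by
    simp only [sin_add_pi, sgn_neg]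
  have h0 := integral_eq_zero_of_antiperiodic hanti
  have hintble (a b : ℝ) := intervalIntegrable_sgn_comp continuous_sin a b
  have h1 := hanti.periodic_two_mul.intervalIntegral_add_zsmul_eq (2 * q) π
    (fun a b => hintble a b)
  have h2 := hanti.periodic_two_mul.intervalIntegral_add_eq π 0
  rw [zero_add, h0] at h2
  rw [h2, smul_zero] at h1
  rw [← intervalIntegral.integral_add_adjacent_intervals (hintble 0 π) (hintble π _),
    integral_sgn_sin_zero_pi,
    show (4 * (q : ℝ) + 1) * π = π + (2 * q : ℤ) • (2 * π) by
      rw [zsmul_eq_mul]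
      push_cast
      ring, h1, add_zero]

theorem squareWaveIntegral_pi_div_two_of_one_mod_four (q : ℤ) :
    squareWaveIntegral (4 * q + 1) (π / 2) = 2 * π / ((4 * q + 1 : ℤ) : ℝ) := by
  set m : ℤ := 4 * q + 1 with hm
  have hm0 : (m : ℝ) ≠ 0 := by
    have : m ≠ 0 := by omega
    exact_mod_cast this
  set f : ℝ → ℝ := fun t => sgn (sin t) * sgn (sin (m * t)) with hf
  have hper : Function.Periodic f π := fun t => by
    simp only [hf]
    have : (m : ℝ) * (t + π) = m * t + π + (2 * q : ℤ) * (2 * π) := by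
      rw [hm]
      push_cast
      ring
    rw [this, sin_add_int_mul_two_pi, sin_add_pi, sin_add_pi, sgn_neg, sgn_neg, neg_mul_neg]
  have hintble (a b : ℝ) : IntervalIntegrable f volume a b := by
    refine (intervalIntegrable_const (c := (1 : ℝ))).mono_fun
      ((measurable_sgn.comp measurable_sin).mul (measurable_sgn.comp
        (measurable_sin.comp (measurable_const_mul _)))).aestronglyMeasurable
      (ae_of_all _ fun t => ?_)
    simp only [hf, norm_mul, norm_one]
    exact mul_le_one₀ (abs_sgn_le_one _) (abs_nonneg _) (abs_sgn_le_one _)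
  have hhalf : ∫ t in 0..π, f t = π / m := by
    have h1 : ∫ t in 0..π, f t = ∫ t in 0..π, sgn (sin (m * t)) := by
      refine intervalIntegral.integral_congr_Ioo_of_le pi_pos.le fun t ht => ?_
      simp [hf, sgn, sin_pos_of_mem_Ioo ht]
    have h2 := integral_sgn_sin_mul_pi q
    rw [h1, intervalIntegral.integral_comp_mul_left (fun t => sgn (sin t)) hm0, mul_zero, hm]
    push_cast
    rw [h2, smul_eq_mul, div_eq_inv_mul]
  have hsplit := intervalIntegral.integral_add_adjacent_intervals (hintble 0 π) (hintble π (π + π))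
  rw [hper.intervalIntegral_add_eq π 0, zero_add, hhalf, ← two_mul π] at hsplit
  simp only [squareWaveIntegral, cos_sub_pi_div_two]
  rw [← hsplit]
  ring

end SquareWave

theorem tendsto_average_of_even_odd {e : ℕ → ℝ} {A B : ℝ}
    (hA : Tendsto (fun N : ℕ => (∑ k ∈ Finset.range N, e (2 * k)) / N) atTop (nhds A))
    (hB : Tendsto (fun N : ℕ => (∑ k ∈ Finset.range N, e (2 * k + 1)) / N) atTop (nhds B)) :
    Tendsto (fun N : ℕ => (∑ n ∈ Finset.range N, e n) / N) atTop (nhds ((A + B) / 2)) := by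
  have hsum (N : ℕ) : ∑ n ∈ Finset.range N, e n =
      ∑ k ∈ Finset.range ((N + 1) / 2), e (2 * k) + ∑ k ∈ Finset.range (N / 2), e (2 * k + 1) := by
    induction N with
    | zero => simp
    | succ N ih =>
      rw [Finset.sum_range_succ, ih]
      rcases Nat.even_or_odd' N with ⟨k, rfl | rfl⟩
      · rw [show (2 * k + 1) / 2 = k by omega, show 2 * k / 2 = k by omega,
          show (2 * k + 1 + 1) / 2 = k + 1 by omega, Finset.sum_range_succ]
        ring
      · rw [show (2 * k + 1 + 1) / 2 = k + 1 by omega, show (2 * k + 1) / 2 = k by omega,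
          show (2 * k + 1 + 1 + 1) / 2 = k + 1 by omega,
          Finset.sum_range_succ (fun k => e (2 * k + 1))]
        ring
  have hhalf (i : ℕ) : Tendsto (fun N : ℕ => (((N + i) / 2 : ℕ) : ℝ) / N) atTop (nhds (1 / 2)) := by
    have h1 : Tendsto (fun N : ℕ => ((1 : ℝ) + i) / (N : ℝ)) atTop (nhds 0) :=
      tendsto_const_div_atTop_nhds_zero_nat _
    rw [tendsto_iff_norm_sub_tendsto_zero]
    refine squeeze_zero' (Eventually.of_forall fun _ => norm_nonneg _) ?_ h1
    filter_upwards [eventually_gt_atTop 0] with N hN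
    have hN' : (0 : ℝ) < N := by exact_mod_cast hN
    have h2 : (((N + i) / 2 : ℕ) : ℝ) * 2 ≤ N + i := by
      exact_mod_cast Nat.div_mul_le_self (N + i) 2
    have h3 : (N : ℝ) + i ≤ (((N + i) / 2 : ℕ) : ℝ) * 2 + 1 := by
      exact_mod_cast (by omega : N + i ≤ (N + i) / 2 * 2 + 1)
    have hi : (0 : ℝ) ≤ i := Nat.cast_nonneg i
    rw [norm_eq_abs, div_sub' hN'.ne', abs_div, abs_of_pos hN']
    gcongr
    rw [abs_le]
    constructor <;> linarith
  have htop (i : ℕ) : Tendsto (fun N : ℕ => (N + i) / 2) atTop atTop :=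
    (Nat.tendsto_div_const_atTop two_ne_zero).comp (tendsto_add_atTop_nat i)
  have h := ((hA.comp (htop 1)).mul (hhalf 1)).add ((hB.comp (htop 0)).mul (hhalf 0))
  rw [show A * (1 / 2) + B * (1 / 2) = (A + B) / 2 by ring] at h
  refine h.congr fun N => ?_
  have hcancel (s : ℝ) (M : ℕ) (hs : M = 0 → s = 0) : s / M * (M / N) = s / N := by
    rcases eq_or_ne M 0 with h | h
    · simp [hs h]
    · have : (M : ℝ) ≠ 0 := by exact_mod_cast h
      field_simp
  simp only [Function.comp, add_zero]
  rw [hcancel _ _ (fun h => by simp [h]), hcancel _ _ (fun h => by simp [h]), hsum, add_div]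

theorem tendsto_average_sgn_ψ_even {x : ℝ} (hx : x ≠ 0) {m : ℤ} (hm : m ≠ 0) :
    Tendsto (fun N : ℕ => (∑ k ∈ Finset.range N,
        if sgn (ψ (2 * k) x) = sgn (ψ (2 * k) (m * x)) then (1 : ℝ) else 0) / N) atTop
      (nhds ((1 + squareWaveIntegral m 0 / (2 * π)) / 2)) := by
  set z : ℝ := 2 * √π * x with hz
  have hz0 : z ≠ 0 := mul_ne_zero (by positivity) hx
  have hsqrt (k : ℕ) : √(2 * k + 1 / 2) * z = z * √2 * √(k + 1 / 4) := by
    rw [mul_assoc, ← sqrt_mul zero_le_two, mul_comm z]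
    congr 2
    ring
  have h := tendsto_average_sgn_eq hm 0 (c := z * √2) (d := 1 / 4)
    (mul_ne_zero hz0 (by positivity)) (by norm_num)
    (a := fun k => hermiteFun (2 * k) z / hermiteFun (2 * k) 0)
    (b := fun k => hermiteFun (2 * k) (m * z) / hermiteFun (2 * k) 0)
    ((tendsto_hermiteFun_even z).congr fun k => by rw [hsqrt, sub_zero])
    ((tendsto_hermiteFun_even (m * z)).congr fun k => by
      rw [mul_left_comm _ (m : ℝ) z, hsqrt, sub_zero])
  refine h.congr fun N => ?_
  congr 1
  refine Finset.sum_congr rfl fun k _ => ?_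
  have h0 : hermiteFun (2 * k) 0 ≠ 0 := mul_ne_zero (He_even_zero_ne_zero k) (exp_ne_zero _)
  simp only [sgn_div_eq_sgn_div_iff h0, ψ_eq_hermiteFun, hz, mul_left_comm (m : ℝ)]

theorem tendsto_average_sgn_ψ_odd {x : ℝ} (hx : x ≠ 0) {m : ℤ} (hm : m ≠ 0) :
    Tendsto (fun N : ℕ => (∑ k ∈ Finset.range N,
        if sgn (ψ (2 * k + 1) x) = sgn (ψ (2 * k + 1) (m * x)) then (1 : ℝ) else 0) / N) atTop
      (nhds ((1 + squareWaveIntegral m (π / 2) / (2 * π)) / 2)) := by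
  set z : ℝ := 2 * √π * x with hz
  have hz0 : z ≠ 0 := mul_ne_zero (by positivity) hx
  have hsqrt (k : ℕ) : √(2 * k + 3 / 2) * z = z * √2 * √(k + 3 / 4) := by
    rw [mul_assoc, ← sqrt_mul zero_le_two, mul_comm z]
    congr 2
    ring
  have h := tendsto_average_sgn_eq hm (π / 2) (c := z * √2) (d := 3 / 4)
    (mul_ne_zero hz0 (by positivity)) (by norm_num)
    (a := fun k => hermiteFun (2 * k + 1) z /
      (hermiteFunDeriv (2 * k + 1) 0 / √(2 * k + 3 / 2)))
    (b := fun k => hermiteFun (2 * k + 1) (m * z) /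
      (hermiteFunDeriv (2 * k + 1) 0 / √(2 * k + 3 / 2)))
    ((tendsto_hermiteFun_odd z).congr fun k => by rw [hsqrt, cos_sub_pi_div_two])
    ((tendsto_hermiteFun_odd (m * z)).congr fun k => by
      rw [mul_left_comm _ (m : ℝ) z, hsqrt, cos_sub_pi_div_two])
  refine h.congr fun N => ?_
  congr 1
  refine Finset.sum_congr rfl fun k _ => ?_
  have h0 : hermiteFunDeriv (2 * k + 1) 0 / √(2 * (k : ℝ) + 3 / 2) ≠ 0 :=
    div_ne_zero (hermiteFunDeriv_odd_zero_ne_zero k) (by positivity)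
  simp only [sgn_div_eq_sgn_div_iff h0, ψ_eq_hermiteFun, hz, mul_left_comm (m : ℝ)]

theorem average_squareWaveIntegral (m : ℤ) :
    ((1 + squareWaveIntegral m 0 / (2 * π)) / 2 +
        (1 + squareWaveIntegral m (π / 2) / (2 * π)) / 2) / 2 =
      if m % 4 = 1 then 1 / 2 + 1 / (2 * (m : ℝ)) else 1 / 2 := by
  split_ifs with h
  · obtain ⟨q, rfl⟩ : ∃ q, m = 4 * q + 1 := ⟨m / 4, by omega⟩
    have hm0 : ((4 * q + 1 : ℤ) : ℝ) ≠ 0 := by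
      exact_mod_cast (by omega : 4 * q + 1 ≠ 0)
    rw [squareWaveIntegral_zero_of_one_mod_four, squareWaveIntegral_pi_div_two_of_one_mod_four]
    field_simp
    ring
  · rcases (by omega : m % 4 = 3 ∨ m % 2 = 0) with h | h
    · obtain ⟨q, rfl⟩ : ∃ q, m = 4 * q + 3 := ⟨m / 4, by omega⟩
      rw [squareWaveIntegral_zero_of_three_mod_four]
      ring
    · obtain ⟨q, rfl⟩ : ∃ q, m = 2 * q := ⟨m / 2, by omega⟩
      rw [squareWaveIntegral_even, squareWaveIntegral_even]
      norm_num

theorem hermite_sign_correlation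
    (x y : ℝ) (hx : x ≠ 0) (hy : y ≠ 0)
    (m : ℤ) (hm : m ≠ 0) (hxy : y = (m : ℝ) * x) :
    Tendsto (fun N : ℕ =>
      (((Finset.range N).filter (fun n => sgn (ψ n x) = sgn (ψ n y))).card : ℝ) / N)
      atTop (nhds (if m % 4 = 1 then 1/2 + 1/(2 * (m : ℝ)) else 1/2)) := by
  subst hxy
  rw [← average_squareWaveIntegral]
  refine (tendsto_average_of_even_odd
    (e := fun n => if sgn (ψ n x) = sgn (ψ n (m * x)) then (1 : ℝ) else 0)
    (tendsto_average_sgn_ψ_even hx hm) (tendsto_average_sgn_ψ_odd hx hm)).congr fun N => ?_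
  rw [Finset.sum_boole]
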